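/- The functional u ↦ ∫_{ℝ²} ( 4 (∂_s∂_t u)² − 2 (∂_s u)² − 2 (∂_t u)² ) is indefinite on C_c^∞(ℝ²): there exist u, v ∈ C_c^∞(ℝ²) with ∫_{ℝ²} ( 4 (∂_s∂_t u)² − 2 (∂_s u)² − 2 (∂_t u)² ) > 0 and ∫_{ℝ²} ( 4 (∂_s∂_t v)² − 2 (∂_s v)² − 2 (∂_t v)² ) < 0. -/

import Mathlib

/-!
Write `u_c x = u (c x)`. The mixed derivative picks up a factor `c²` and the gradient a factor `c`,
while the area element contributes `c⁻²`, so the functional takes the value `4 c² M - 2 D` at `u_c`,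
where `M` and `D` are the integrals of `(∂ₛ∂ₜu)²` and of `(∂ₛu)² + (∂ₜu)²`. A compactly
supported function that is constant along all lines of one direction vanishes, so none of `∂ₛu`,
`∂ₜu` and `∂ₛ∂ₜu` is identically zero when `u ≠ 0`. Then `M` and `D` are positive, and the value is
positive for large `c` and negative for small `c > 0`.
-/

open MeasureTheory Real

/-- Partial derivative of `u : ℝ² → ℝ` in the first coordinate. -/
noncomputable def pdS (u : ℝ × ℝ → ℝ) (x : ℝ × ℝ) : ℝ := fderiv ℝ u x (1, 0)

/-- Partial derivative of `u : ℝ² → ℝ` in the second coordinate. -/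
noncomputable def pdT (u : ℝ × ℝ → ℝ) (x : ℝ × ℝ) : ℝ := fderiv ℝ u x (0, 1)

open Filter Topology

section DirectionalDerivative

variable {E F : Type*} [NormedAddCommGroup E] [NormedSpace ℝ E]
  [NormedAddCommGroup F] [NormedSpace ℝ F]

lemma eq_zero_of_fderiv_apply_eq_zero_of_hasCompactSupport {f : E → F} {v : E}
    (hf : Differentiable ℝ f) (hc : HasCompactSupport f) (hv : v ≠ 0)
    (h : ∀ x, fderiv ℝ f x v = 0) : f = 0 := by
  funext x
  let line : ℝ → E := fun t ↦ x + t • v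
  have hline : IsClosedEmbedding line :=
    (Homeomorph.addLeft x).isClosedEmbedding.comp (isClosedEmbedding_smul_left hv)
  have hderiv (t : ℝ) : HasDerivAt (f ∘ line) 0 t := by
    have hline' : HasDerivAt line v t := by
      simpa only [one_smul] using! ((hasDerivAt_id t).smul_const v).const_add x
    simpa [h] using (hf (line t)).hasFDerivAt.comp_hasDerivAt t hline'
  have hconst (t : ℝ) : (f ∘ line) t = f x := by
    simpa [line] using is_const_of_deriv_eq_zero (fun t ↦ (hderiv t).differentiableAt)
      (fun t ↦ (hderiv t).deriv) t 0
  have hlim : Tendsto (f ∘ line) (cocompact ℝ) (𝓝 0) :=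
    (hc.comp_isClosedEmbedding hline).is_zero_at_infty
  exact tendsto_nhds_unique (tendsto_const_nhds.congr fun t ↦ (hconst t).symm) hlim

end DirectionalDerivative

section IntegralSq

variable {X : Type*} [TopologicalSpace X] {f : X → ℝ}

lemma hasCompactSupport_sq (hc : HasCompactSupport f) : HasCompactSupport fun x ↦ f x ^ 2 :=
  hc.comp_left (g := (· ^ 2)) (by simp)

variable [MeasurableSpace X] [OpensMeasurableSpace X] {μ : Measure X} [IsFiniteMeasureOnCompacts μ]

lemma integrable_sq_of_hasCompactSupport (hf : Continuous f) (hc : HasCompactSupport f) :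
    Integrable (fun x ↦ f x ^ 2) μ :=
  (hf.pow 2).integrable_of_hasCompactSupport (hasCompactSupport_sq hc)

lemma integral_sq_pos_of_hasCompactSupport [μ.IsOpenPosMeasure] (hf : Continuous f)
    (hc : HasCompactSupport f) (hne : f ≠ 0) : 0 < ∫ x, f x ^ 2 ∂μ := by
  obtain ⟨x, hx⟩ := Function.ne_iff.1 hne
  exact (hf.pow 2).integral_pos_of_hasCompactSupport_nonneg_nonzero (hasCompactSupport_sq hc)
    (fun x ↦ sq_nonneg (f x)) (pow_ne_zero 2 hx)

end IntegralSq

section PartialDerivatives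

variable {u : ℝ × ℝ → ℝ}

lemma continuous_pdS (hu : ContDiff ℝ 1 u) : Continuous (pdS u) :=
  (hu.continuous_fderiv one_ne_zero).clm_apply continuous_const

lemma contDiff_pdT {m n : WithTop ℕ∞} (hu : ContDiff ℝ n u) (hmn : m + 1 ≤ n) :
    ContDiff ℝ m (pdT u) :=
  (hu.fderiv_right hmn).clm_apply contDiff_const

lemma continuous_pdT (hu : ContDiff ℝ 1 u) : Continuous (pdT u) :=
  (contDiff_pdT hu (zero_add 1).le).continuous

lemma hasCompactSupport_pdS (hc : HasCompactSupport u) : HasCompactSupport (pdS u) :=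
  hc.fderiv_apply ℝ (1, 0)

lemma hasCompactSupport_pdT (hc : HasCompactSupport u) : HasCompactSupport (pdT u) :=
  hc.fderiv_apply ℝ (0, 1)

lemma integrable_pdS_sq (hu : ContDiff ℝ 1 u) (hc : HasCompactSupport u) :
    Integrable fun x ↦ pdS u x ^ 2 :=
  integrable_sq_of_hasCompactSupport (continuous_pdS hu) (hasCompactSupport_pdS hc)

lemma integrable_pdT_sq (hu : ContDiff ℝ 1 u) (hc : HasCompactSupport u) :
    Integrable fun x ↦ pdT u x ^ 2 :=
  integrable_sq_of_hasCompactSupport (continuous_pdT hu) (hasCompactSupport_pdT hc)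

lemma pdS_ne_zero (hu : Differentiable ℝ u) (hc : HasCompactSupport u) (hne : u ≠ 0) :
    pdS u ≠ 0 := fun h ↦
  hne <| eq_zero_of_fderiv_apply_eq_zero_of_hasCompactSupport hu hc (by simp) (congrFun h)

lemma pdT_ne_zero (hu : Differentiable ℝ u) (hc : HasCompactSupport u) (hne : u ≠ 0) :
    pdT u ≠ 0 := fun h ↦
  hne <| eq_zero_of_fderiv_apply_eq_zero_of_hasCompactSupport hu hc (by simp) (congrFun h)

lemma pdS_const_smul (c : ℝ) (u : ℝ × ℝ → ℝ) : pdS (c • u) = c • pdS u := by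
  funext x
  simp [pdS, fderiv_const_smul_field]

lemma pdS_comp_smul (c : ℝ) (u : ℝ × ℝ → ℝ) :
    pdS (fun x ↦ u (c • x)) = fun x ↦ c * pdS u (c • x) := by
  funext x
  simp [pdS, fderiv_comp_smul]

lemma pdT_comp_smul (c : ℝ) (u : ℝ × ℝ → ℝ) :
    pdT (fun x ↦ u (c • x)) = fun x ↦ c * pdT u (c • x) := by
  funext x
  simp [pdT, fderiv_comp_smul]

lemma pdS_pdT_comp_smul (c : ℝ) (u : ℝ × ℝ → ℝ) :
    pdS (pdT fun x ↦ u (c • x)) = fun x ↦ c ^ 2 * pdS (pdT u) (c • x) := by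
  have hT : (pdT fun x ↦ u (c • x)) = c • fun x ↦ pdT u (c • x) := pdT_comp_smul c u
  rw [hT, pdS_const_smul, pdS_comp_smul]
  funext x
  simp only [Pi.smul_apply, smul_eq_mul]
  ring

end PartialDerivatives

/-- The Hamiltonian second variation, up to overall sign, of the `G′`-area of the normal congruence
of an indefinite tube over an unbounded geodesic of `AdS³`, as a functional of the Hamiltonian. -/
noncomputable def secondVariation (u : ℝ × ℝ → ℝ) : ℝ :=
  ∫ x, (4 * (pdS (pdT u) x) ^ 2 - 2 * (pdS u x) ^ 2 - 2 * (pdT u x) ^ 2)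

/-- The squared `L²` norm of the mixed derivative, the positive part of `secondVariation`. -/
noncomputable def mixedEnergy (u : ℝ × ℝ → ℝ) : ℝ := ∫ x, pdS (pdT u) x ^ 2

/-- The Dirichlet energy, without the customary factor `1 / 2`; it is the negative part of
`secondVariation`. -/
noncomputable def dirichletEnergy (u : ℝ × ℝ → ℝ) : ℝ := ∫ x, (pdS u x ^ 2 + pdT u x ^ 2)

lemma integral_comp_smul_prod_real (c : ℝ) (f : ℝ × ℝ → ℝ) :
    ∫ x, f (c • x) = (c ^ 2)⁻¹ * ∫ x, f x := by
  simp [Measure.integral_comp_smul volume f c]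

lemma mixedEnergy_comp_smul (c : ℝ) (u : ℝ × ℝ → ℝ) :
    mixedEnergy (fun x ↦ u (c • x)) = c ^ 2 * mixedEnergy u := by
  simp only [mixedEnergy, pdS_pdT_comp_smul, mul_pow]
  rw [integral_const_mul, integral_comp_smul_prod_real c fun x ↦ pdS (pdT u) x ^ 2]
  field_simp

lemma dirichletEnergy_comp_smul {c : ℝ} (hc : c ≠ 0) (u : ℝ × ℝ → ℝ) :
    dirichletEnergy (fun x ↦ u (c • x)) = dirichletEnergy u := by
  simp only [dirichletEnergy, pdS_comp_smul, pdT_comp_smul, mul_pow, ← mul_add]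
  rw [integral_const_mul, integral_comp_smul_prod_real c fun x ↦ pdS u x ^ 2 + pdT u x ^ 2,
    mul_inv_cancel_left₀ (pow_ne_zero 2 hc)]

section Energies

variable {u : ℝ × ℝ → ℝ}

lemma mixedEnergy_pos (hu : ContDiff ℝ 2 u) (hc : HasCompactSupport u) (hne : u ≠ 0) :
    0 < mixedEnergy u := by
  have hT : ContDiff ℝ 1 (pdT u) := contDiff_pdT hu one_add_one_eq_two.le
  have hcT : HasCompactSupport (pdT u) := hasCompactSupport_pdT hc
  have hneT : pdT u ≠ 0 := pdT_ne_zero (hu.differentiable two_ne_zero) hc hne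
  exact integral_sq_pos_of_hasCompactSupport (continuous_pdS hT) (hasCompactSupport_pdS hcT)
    (pdS_ne_zero (hT.differentiable one_ne_zero) hcT hneT)

lemma dirichletEnergy_pos (hu : ContDiff ℝ 1 u) (hc : HasCompactSupport u) (hne : u ≠ 0) :
    0 < dirichletEnergy u := by
  have hneS : pdS u ≠ 0 := pdS_ne_zero (hu.differentiable one_ne_zero) hc hne
  rw [dirichletEnergy, integral_add (integrable_pdS_sq hu hc) (integrable_pdT_sq hu hc)]
  exact add_pos_of_pos_of_nonneg
    (integral_sq_pos_of_hasCompactSupport (continuous_pdS hu) (hasCompactSupport_pdS hc) hneS)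
    (integral_nonneg fun x ↦ sq_nonneg (pdT u x))

lemma secondVariation_eq (hu : ContDiff ℝ 2 u) (hc : HasCompactSupport u) :
    secondVariation u = 4 * mixedEnergy u - 2 * dirichletEnergy u := by
  have hu₁ : ContDiff ℝ 1 u := hu.of_le one_le_two
  have hmixed : Integrable fun x ↦ pdS (pdT u) x ^ 2 :=
    integrable_pdS_sq (contDiff_pdT hu one_add_one_eq_two.le) (hasCompactSupport_pdT hc)
  have hgrad : Integrable fun x ↦ pdS u x ^ 2 + pdT u x ^ 2 :=
    (integrable_pdS_sq hu₁ hc).add (integrable_pdT_sq hu₁ hc)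
  rw [mixedEnergy, dirichletEnergy, ← integral_const_mul, ← integral_const_mul,
    ← integral_sub (hmixed.const_mul 4) (hgrad.const_mul 2)]
  simp only [secondVariation, mul_add, sub_add_eq_sub_sub]

lemma secondVariation_comp_smul (hu : ContDiff ℝ 2 u) (hc : HasCompactSupport u) {c : ℝ}
    (hc₀ : c ≠ 0) :
    secondVariation (fun x ↦ u (c • x)) = 4 * c ^ 2 * mixedEnergy u - 2 * dirichletEnergy u := by
  have huc : ContDiff ℝ 2 fun x ↦ u (c • x) := hu.comp (contDiff_const_smul c)
  rw [secondVariation_eq huc (hc.comp_smul hc₀), mixedEnergy_comp_smul,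
    dirichletEnergy_comp_smul hc₀, mul_assoc]

theorem tube_congruence_antiDeSitter_G'_unstable_general (hu : ContDiff ℝ 2 u)
    (hc : HasCompactSupport u) (hne : u ≠ 0) :
    (∀ᶠ c : ℝ in atTop, 0 < secondVariation fun x ↦ u (c • x)) ∧
      ∀ᶠ c : ℝ in 𝓝[>] 0, secondVariation (fun x ↦ u (c • x)) < 0 := by
  have hM : 0 < mixedEnergy u := mixedEnergy_pos hu hc hne
  have hD : 0 < dirichletEnergy u := dirichletEnergy_pos (hu.of_le one_le_two) hc hne
  constructor
  · have hlim : Tendsto (fun c : ℝ ↦ 4 * c ^ 2 * mixedEnergy u) atTop atTop :=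
      ((tendsto_pow_atTop two_ne_zero).const_mul_atTop four_pos).atTop_mul_const hM
    filter_upwards [hlim.eventually_gt_atTop (2 * dirichletEnergy u), eventually_ne_atTop 0]
      with c hlt hc₀
    rw [secondVariation_comp_smul hu hc hc₀]
    exact sub_pos.2 hlt
  · have hlim : Tendsto (fun c : ℝ ↦ 4 * c ^ 2 * mixedEnergy u) (𝓝[>] 0) (𝓝 0) := by
      have hcont : Continuous fun c : ℝ ↦ 4 * c ^ 2 * mixedEnergy u := by fun_prop
      exact (hcont.tendsto' 0 0 (by simp)).mono_left nhdsWithin_le_nhds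
    filter_upwards [hlim.eventually_lt_const (mul_pos two_pos hD), self_mem_nhdsWithin]
      with c hlt hc₀
    rw [secondVariation_comp_smul hu hc (ne_of_gt hc₀)]
    exact sub_neg.2 hlt

end Energies

/-- the functional `u ↦ ∫_{ℝ²} (4(∂ₛ∂ₜu)² − 2(∂ₛu)² − 2(∂ₜu)²)` is indefinite
on `C_c^∞(ℝ²)` (H-instability w.r.t. `G′` of the tube congruence over an unbounded geodesic
of `AdS³`). -/
theorem tube_congruence_antiDeSitter_G'_unstable :
    ∃ u v : ℝ × ℝ → ℝ,
      (ContDiff ℝ (⊤ : ℕ∞) u ∧ HasCompactSupport u) ∧ (ContDiff ℝ (⊤ : ℕ∞) v ∧ HasCompactSupport v) ∧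
      0 < (∫ x, (4 * (pdS (pdT u) x) ^ 2 - 2 * (pdS u x) ^ 2 - 2 * (pdT u x) ^ 2)) ∧
      (∫ x, (4 * (pdS (pdT v) x) ^ 2 - 2 * (pdS v x) ^ 2 - 2 * (pdT v x) ^ 2)) < 0 := by
  obtain ⟨u, -, hc, hu, -, hu₀⟩ :=
    exists_contDiff_tsupport_subset (n := ⊤) (univ_mem : Set.univ ∈ 𝓝 (0 : ℝ × ℝ))
  have hne : u ≠ 0 := by
    rintro rfl
    simp at hu₀
  obtain ⟨hpos, hneg⟩ := tube_congruence_antiDeSitter_G'_unstable_general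
    (contDiff_infty.1 hu 2) hc hne
  obtain ⟨a, ha, ha₀⟩ := (hpos.and (eventually_ne_atTop 0)).exists
  obtain ⟨b, hb, hb₀⟩ := (hneg.and self_mem_nhdsWithin).exists
  exact ⟨fun x ↦ u (a • x), fun x ↦ u (b • x),
    ⟨hu.comp (contDiff_const_smul a), hc.comp_smul ha₀⟩,
    ⟨hu.comp (contDiff_const_smul b), hc.comp_smul (ne_of_gt hb₀)⟩, ha, hb⟩
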